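/- Let G be an antipodal distance-regular graph of diameter 3 which is an antipodal r-cover, with distinct adjacency eigenvalues k > θ₁ > θ₂ > θ₃, and let q ≤ −1 be a real number. Then the q-distance matrix 𝔻_q has exactly three distinct eigenvalues if and only if θ₁ = −r/q − 1. -/

import Mathlib

open Matrix

variable {V : Type*} [Fintype V] [DecidableEq V]

/-- The distance-`i` matrix of a graph: the `(x,y)` entry is 1 if `dist x y = i`, else 0. -/
noncomputable def distM (G : SimpleGraph V) (i : ℕ) : Matrix V V ℝ :=
  Matrix.of fun x y => if G.dist x y = i then (1 : ℝ) else 0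

/-- The `q`-distance matrix `𝔻_q = ∑_{i=1}^D (1 + 1/q + ⋯ + 1/q^{i-1}) • A_i`. -/
noncomputable def qDist (G : SimpleGraph V) (D : ℕ) (q : ℝ) : Matrix V V ℝ :=
  ∑ i ∈ Finset.Icc 1 D, (∑ j ∈ Finset.range i, (1 / q) ^ j) • distM G i

/-- `G` is distance-regular with diameter `D` and intersection numbers `b i`, `c i`
(with `c 1 = 1`): for any vertices `x, y` at distance `i ≤ D`, the number of neighbors
of `y` at distance `i - 1` from `x` is `c i` and the number of neighbors of `y` at
distance `i + 1` from `x` is `b i`. -/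
def IsDRG (G : SimpleGraph V) (D : ℕ) (b c : ℕ → ℕ) : Prop :=
  G.Connected ∧
  (∀ x y : V, G.dist x y ≤ D) ∧
  (∃ x y : V, G.dist x y = D) ∧
  c 1 = 1 ∧
  ∀ i ≤ D, ∀ x y : V, G.dist x y = i →
    ({z : V | G.Adj y z ∧ G.dist x z = i - 1} : Set V).ncard = c i ∧
    ({z : V | G.Adj y z ∧ G.dist x z = i + 1} : Set V).ncard = b i

/-- `a i = k - b i - c i` as a real number, where `k = b 0`. -/
noncomputable def aInt (b c : ℕ → ℕ) (i : ℕ) : ℝ := (b 0 : ℝ) - (b i : ℝ) - (c i : ℝ)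

/-- `G` is antipodal with diameter `D`: being equal or at distance `D` is an equivalence
relation on the vertices. -/
def IsAntipodal (G : SimpleGraph V) (D : ℕ) : Prop :=
  ∀ u v w : V, G.dist u v = D → G.dist u w = D → (v = w ∨ G.dist v w = D)

/-- `G` is an antipodal `r`-cover with diameter `D`: every antipodal class has exactly `r`
elements. -/
def IsAntipodalCover (G : SimpleGraph V) (D r : ℕ) : Prop :=
  IsAntipodal G D ∧ ∀ x : V, ({y : V | y = x ∨ G.dist x y = D} : Set V).ncard = r

lemma aux_spec (M : Matrix V V ℝ) (μ : ℝ) :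
    μ ∈ spectrum ℝ M ↔ ∃ v : V → ℝ, v ≠ 0 ∧ M *ᵥ v = μ • v := by
  rw [← Matrix.spectrum_toLin', ← Module.End.hasEigenvalue_iff_mem_spectrum]
  constructor
  · intro h
    obtain ⟨v, hv⟩ := h.exists_hasEigenvector
    exact ⟨v, hv.2, by simpa using hv.apply_eq_smul⟩
  · rintro ⟨v, h0, hv⟩
    exact Module.End.hasEigenvalue_of_hasEigenvector
      (x := v) ⟨Module.End.mem_eigenspace_iff.2 (by simpa using hv), h0⟩

lemma aux_alg (A B J D : Matrix V V ℝ) (k a1 b1 c2 n r t θ₁ θ₂ θ₃ : ℝ)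
    (hk : 0 ≤ k) (hn : 0 ≤ n) (hr : 0 ≤ r) (ht0 : t < 0) (ht1 : -1 ≤ t)
    (ha : a1 = k - b1 - 1) (hbc : 0 < b1 + c2)
    (hAB : A * B + B = J) (hBA : B * A + B = J)
    (hBB : B * B = r • B) (hAA : A * A = k • 1 + a1 • A + c2 • (A * B - A))
    (hAJ : A * J = k • J) (hJA : J * A = k • J) (hJB : J * B = r • J) (hBJ : B * J = r • J)
    (hJJ : J * J = n • J) (hJ0 : ∃ v, J *ᵥ v ≠ 0)
    (hD : D = (-t) • A + (1 + t) • (J - 1) + t ^ 2 • (B - 1))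
    (h1 : k > θ₁) (h2 : θ₁ > θ₂) (h3 : θ₂ > θ₃)
    (hspec : spectrum ℝ A = ({k, θ₁, θ₂, θ₃} : Set ℝ)) :
    (spectrum ℝ D).ncard = 3 ↔ θ₁ = - r * t - 1 := by
  have key : ∀ v θ, A *ᵥ v = θ • v → B *ᵥ v = 0 → v ≠ 0 →
      θ ^ 2 = k + a1 * θ - c2 * θ := by
    intro v θ hv hB h0
    have e : (A * A) *ᵥ v = (k • (1 : Matrix V V ℝ) + a1 • A + c2 • (A * B - A)) *ᵥ v := by
      rw [hAA]
    simp only [← Matrix.mulVec_mulVec, Matrix.add_mulVec, Matrix.sub_mulVec, Matrix.smul_mulVec,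
      hv, hB, Matrix.mulVec_smul, Matrix.one_mulVec, Matrix.mulVec_zero] at e
    obtain ⟨i, hi⟩ := Function.ne_iff.1 h0
    have e' := congrFun e i
    simp only [Pi.smul_apply, Pi.add_apply, Pi.sub_apply, Pi.zero_apply, smul_eq_mul] at e' hi
    apply mul_right_cancel₀ hi
    linear_combination e'
  have kill : ∀ v θ, A *ᵥ v = θ • v → θ ≠ k → J *ᵥ v = 0 := by
    intro v θ hv hne
    have e : (J * A) *ᵥ v = (k • J) *ᵥ v := by rw [hJA]
    rw [← Matrix.mulVec_mulVec, hv, Matrix.mulVec_smul, Matrix.smul_mulVec] at e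
    have : (θ - k) • (J *ᵥ v) = 0 := by rw [sub_smul, e, sub_self]
    exact (smul_eq_zero.1 this).resolve_left (sub_ne_zero.2 hne)
  have killB : ∀ v θ, A *ᵥ v = θ • v → θ ≠ k → θ ≠ -1 → B *ᵥ v = 0 := by
    intro v θ hv hne hne1
    have e : (B * A + B) *ᵥ v = J *ᵥ v := by rw [hBA]
    rw [kill v θ hv hne, Matrix.add_mulVec, ← Matrix.mulVec_mulVec, hv, Matrix.mulVec_smul] at e
    have : (θ + 1) • (B *ᵥ v) = 0 := by rw [add_smul, one_smul, e]
    refine (smul_eq_zero.1 this).resolve_left ?_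
    intro h; apply hne1; linarith
  have memA : ∀ θ ∈ ({k, θ₁, θ₂, θ₃} : Set ℝ), ∃ v : V → ℝ, v ≠ 0 ∧ A *ᵥ v = θ • v := by
    intro θ hθ
    rw [← hspec] at hθ
    exact (aux_spec _ _).1 hθ
  obtain ⟨v1, v1n, hv1⟩ := memA θ₁ (by simp)
  obtain ⟨v2, v2n, hv2⟩ := memA θ₂ (by simp)
  obtain ⟨v3, v3n, hv3⟩ := memA θ₃ (by simp)
  have alt : ∀ v θ, v ≠ 0 → A *ᵥ v = θ • v → θ ≠ k → θ = -1 ∨ θ ^ 2 = k + a1 * θ - c2 * θ := by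
    intro v θ h0 hv hne
    by_cases h : θ = -1
    · exact Or.inl h
    · exact Or.inr (key v θ hv (killB v θ hv hne h) h0)
  have q1 := alt v1 θ₁ v1n hv1 h1.ne
  have q2 := alt v2 θ₂ v2n hv2 (by linarith : θ₂ < k).ne
  have q3 := alt v3 θ₃ v3n hv3 (by linarith : θ₃ < k).ne
  have viet : ∀ x y : ℝ, x > y → x ^ 2 = k + a1 * x - c2 * x → y ^ 2 = k + a1 * y - c2 * y →
      x + y = a1 - c2 ∧ x * y = - k ∧ y < -1 ∧ -1 < x := by
    intro x y hxy hx hy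
    have s : x + y = a1 - c2 := by
      have : (x - y) * (x + y - (a1 - c2)) = 0 := by linear_combination hx - hy
      rcases mul_eq_zero.1 this with h | h <;> linarith
    have p : x * y = -k := by
      have : a1 - c2 = x + y := s.symm
      linear_combination hx - x * this - 2 * hx + hx + x * this - hx + x * s
    have m : (x + 1) * (y + 1) < 0 := by nlinarith
    refine ⟨s, p, ?_, ?_⟩
    · by_contra h; nlinarith
    · by_contra h; nlinarith
  have all : θ₂ = -1 ∧ θ₁ ^ 2 = k + a1 * θ₁ - c2 * θ₁ ∧ θ₃ ^ 2 = k + a1 * θ₃ - c2 * θ₃ := by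
    rcases q1 with q1 | q1 <;> rcases q2 with q2 | q2 <;> rcases q3 with q3 | q3
    · linarith
    · linarith
    · linarith
    · have := viet _ _ h3 q2 q3
      linarith
    · linarith
    · exact ⟨q2, q1, q3⟩
    · have := viet _ _ h2 q1 q2
      linarith
    · have := viet _ _ h2 q1 q2
      have := viet _ _ h3 q2 q3
      linarith
  obtain ⟨e2, e1, e3⟩ := all
  subst e2
  obtain ⟨s, p, l3, l1⟩ := viet θ₁ θ₃ (by linarith) e1 e3
  have hquad : ∀ θ : ℝ, θ ^ 2 = k + a1 * θ - c2 * θ → θ = θ₁ ∨ θ = θ₃ := by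
    intro θ h
    have : (θ - θ₁) * (θ - θ₃) = 0 := by linear_combination h + p - θ * s
    rcases mul_eq_zero.1 this with h | h
    · left; linarith
    · right; linarith
  have Dker : ∀ v θ, A *ᵥ v = θ • v → B *ᵥ v = 0 → J *ᵥ v = 0 →
      D *ᵥ v = (-t * θ - (1 + t) - t ^ 2) • v := by
    intro v θ hv hB hJ
    rw [hD]
    simp only [Matrix.add_mulVec, Matrix.sub_mulVec, Matrix.smul_mulVec, hv, hB, hJ,
      Matrix.one_mulVec]
    module
  have DJ : ∀ v, D *ᵥ (J *ᵥ v) = (-t * k + (1 + t) * (n - 1) + t ^ 2 * (r - 1)) • (J *ᵥ v) := by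
    intro v
    have : D * J = (-t * k + (1 + t) * (n - 1) + t ^ 2 * (r - 1)) • J := by
      rw [hD]
      simp only [add_mul, sub_mul, smul_mul_assoc, hAJ, hJJ, hBJ, one_mul]
      module
    rw [Matrix.mulVec_mulVec, this, Matrix.smul_mulVec]
  have JD : J * D = (-t * k + (1 + t) * (n - 1) + t ^ 2 * (r - 1)) • J := by
    rw [hD]
    simp only [mul_add, mul_sub, mul_smul_comm, hJA, hJJ, hJB, mul_one]
    module
  have BD : B * D = (-1 + t ^ 2 * (r - 1)) • B + (-t + (1 + t) * r) • J := by
    have hBA' : B * A = J - B := by rw [← hBA]; abel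
    rw [hD]
    simp only [mul_add, mul_sub, mul_smul_comm, hBA', hBJ, hBB, mul_one]
    module
  have DB : D * B = (-1 + t ^ 2 * (r - 1)) • B + (-t + (1 + t) * r) • J := by
    have hAB' : A * B = J - B := by rw [← hAB]; abel
    rw [hD]
    simp only [add_mul, sub_mul, smul_mul_assoc, hAB', hJB, hBB, one_mul]
    module
  have hS : spectrum ℝ D = ({-t * k + (1 + t) * (n - 1) + t ^ 2 * (r - 1),
      -t * θ₁ - (1 + t) - t ^ 2, -1 + t ^ 2 * (r - 1), -t * θ₃ - (1 + t) - t ^ 2} : Set ℝ) := by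
    ext μ
    simp only [Set.mem_insert_iff, Set.mem_singleton_iff]
    rw [aux_spec]
    constructor
    · rintro ⟨v, v0, hv⟩
      by_cases hJ : J *ᵥ v = 0
      · by_cases hB : B *ᵥ v = 0
        · have hA : A *ᵥ v = (-(μ + 1 + t + t ^ 2) / t) • v := by
            rw [hD] at hv
            simp only [Matrix.add_mulVec, Matrix.sub_mulVec, Matrix.smul_mulVec, hB, hJ,
              Matrix.one_mulVec] at hv
            ext i
            have := congrFun hv i
            simp only [Pi.smul_apply, Pi.add_apply, Pi.sub_apply, Pi.zero_apply,
              smul_eq_mul] at this ⊢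
            have ht := ht0.ne
            field_simp
            linear_combination -this
          have ht := ht0.ne
          rcases hquad _ (key _ _ hA hB v0) with h | h
          · right; left
            rw [← h]; field_simp; ring
          · right; right; right
            rw [← h]; field_simp; ring
        · right; right; left
          have e : (B * D) *ᵥ v = μ • (B *ᵥ v) := by
            rw [← Matrix.mulVec_mulVec, hv, Matrix.mulVec_smul]
          rw [BD, Matrix.add_mulVec, Matrix.smul_mulVec, Matrix.smul_mulVec, hJ, smul_zero,
            add_zero] at e
          exact (smul_left_injective ℝ hB e).symm
      · left
        have e : (J * D) *ᵥ v = μ • (J *ᵥ v) := by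
          rw [← Matrix.mulVec_mulVec, hv, Matrix.mulVec_smul]
        rw [JD, Matrix.smul_mulVec] at e
        exact (smul_left_injective ℝ hJ e).symm
    · rintro (h | h | h | h)
      · obtain ⟨v, hv⟩ := hJ0
        exact ⟨J *ᵥ v, hv, by rw [h, DJ]⟩
      · exact ⟨v1, v1n, by
          rw [h, Dker v1 θ₁ hv1 (killB _ _ hv1 h1.ne l1.ne') (kill _ _ hv1 h1.ne)]⟩
      · refine ⟨B *ᵥ v2, ?_, ?_⟩
        · intro hB
          have := key _ _ hv2 hB v2n
          nlinarith
        · rw [Matrix.mulVec_mulVec, DB, Matrix.add_mulVec, Matrix.smul_mulVec,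
            Matrix.smul_mulVec, kill _ _ hv2 (by linarith : (-1 : ℝ) < k).ne, smul_zero,
            add_zero, h]
      · have hk3 : θ₃ ≠ k := (by linarith : θ₃ < k).ne
        exact ⟨v3, v3n, by
          rw [h, Dker v3 θ₃ hv3 (killB _ _ hv3 hk3 l3.ne) (kill _ _ hv3 hk3)]⟩
  rw [hS]
  have ht2 : 0 < t ^ 2 := by nlinarith
  have hp : 0 ≤ (1 + t) * n := mul_nonneg (by linarith) hn
  have hp2 : 0 ≤ t ^ 2 * r := by positivity
  set δ0 := -t * k + (1 + t) * (n - 1) + t ^ 2 * (r - 1) with hδ0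
  set δ1 := -t * θ₁ - (1 + t) - t ^ 2 with hδ1
  set δ2 := -1 + t ^ 2 * (r - 1) with hδ2
  set δ3 := -t * θ₃ - (1 + t) - t ^ 2 with hδ3
  have d01 : δ0 ≠ δ1 := by
    have : δ1 < δ0 := by rw [hδ0, hδ1]; nlinarith
    exact this.ne'
  have d02 : δ0 ≠ δ2 := by
    have : δ2 < δ0 := by rw [hδ0, hδ2]; nlinarith
    exact this.ne'
  have d31 : δ3 < δ1 := by rw [hδ3, hδ1]; nlinarith
  have d03 : δ0 ≠ δ3 := by
    have : δ3 < δ0 := by rw [hδ0, hδ3]; nlinarith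
    exact this.ne'
  have d23 : δ2 ≠ δ3 := by
    have : δ3 < δ2 := by rw [hδ2, hδ3]; nlinarith
    exact this.ne'
  have d12 : δ1 = δ2 ↔ θ₁ = - r * t - 1 := by
    rw [hδ1, hδ2]
    constructor
    · intro h
      apply mul_left_cancel₀ ht0.ne
      linear_combination -h
    · intro h
      rw [h]; ring
  rw [← d12]
  have c23 : ({δ2, δ3} : Set ℝ).ncard = 2 := Set.ncard_pair d23
  constructor
  · intro h
    by_contra hne
    rw [Set.ncard_insert_of_notMem (by simp [d01, d02, d03]) (Set.toFinite _),
      Set.ncard_insert_of_notMem (by simp [hne, d31.ne']) (Set.toFinite _), c23] at h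
    omega
  · intro h
    rw [h, Set.insert_eq_of_mem (a := δ2) (by simp),
      Set.ncard_insert_of_notMem (by simp [d02, d03]) (Set.toFinite _), c23]

open Classical in
lemma aux_cnt (P : V → Prop) : (∑ z, if P z then (1 : ℝ) else 0) = (({z | P z} : Set V).ncard : ℝ) := by
  rw [Finset.sum_boole, Set.ncard_eq_toFinset_card']
  simp

lemma aux_final (G : SimpleGraph V) (b c : ℕ → ℕ) (r : ℕ) (hG : IsDRG G 3 b c)
    (hcov : IsAntipodalCover G 3 r)
    (θ₁ θ₂ θ₃ : ℝ) (h1 : (b 0 : ℝ) > θ₁) (h2 : θ₁ > θ₂) (h3 : θ₂ > θ₃)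
    (hspec : spectrum ℝ (distM G 1) = ({(b 0 : ℝ), θ₁, θ₂, θ₃} : Set ℝ))
    (q : ℝ) (hq : q ≤ -1) :
    (spectrum ℝ (qDist G 3 q)).ncard = 3 ↔ θ₁ = -(r : ℝ) / q - 1 := by
  classical
  obtain ⟨hconn, hdiam, ⟨x₀, y₀, hxy₀⟩, hc1, hreg⟩ := hG
  obtain ⟨hanti, hcls⟩ := hcov
  have dz : ∀ x y, G.dist x y = 0 ↔ x = y := fun x y => hconn.dist_eq_zero_iff
  have d1 : ∀ x y, G.dist x y = 1 ↔ G.Adj x y := fun x y => SimpleGraph.dist_eq_one_iff_adj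
  have tri : ∀ x y z, G.dist x z ≤ G.dist x y + G.dist y z := fun x y z => hconn.dist_triangle
  have dc : ∀ x y, G.dist x y = G.dist y x := fun x y => SimpleGraph.dist_comm
  -- a geodesic
  obtain ⟨p₁, hp₁, hp₂⟩ : ∃ p, G.Adj x₀ p ∧ G.dist p y₀ = 2 := by
    obtain ⟨w, hw⟩ := hconn.exists_walk_length_eq_dist x₀ y₀
    rw [hxy₀] at hw
    cases w with
    | nil => simp at hw
    | cons h w =>
      rename_i p
      refine ⟨p, h, ?_⟩
      have := SimpleGraph.dist_le w
      have := tri x₀ p y₀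
      have := (d1 x₀ p).2 h
      simp at hw
      omega
  have hb2 : 0 < b 2 := by
    have := (hreg 2 (by norm_num) y₀ p₁ (by rw [dc]; exact hp₂)).2
    rw [← this, Set.ncard_pos]
    exact ⟨x₀, hp₁.symm, by rw [dc]; exact hxy₀⟩
  have hb1 : 0 < b 1 := by
    obtain ⟨w, hw⟩ := hconn.exists_walk_length_eq_dist p₁ y₀
    rw [hp₂] at hw
    cases w with
    | nil => simp at hw
    | cons h w =>
      rename_i p
      have e1 := SimpleGraph.dist_le w
      have e2 := tri p₁ p y₀
      have e3 := (d1 p₁ p).2 h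
      simp at hw
      have e4 : G.dist y₀ p = 1 := by rw [dc]; omega
      have := (hreg 1 (by norm_num) y₀ p e4).2
      rw [← this, Set.ncard_pos]
      exact ⟨p₁, h.symm, by rw [dc]; exact hp₂⟩
  set A := distM G 1 with hA
  set B : Matrix V V ℝ := Matrix.of fun x y => if x = y ∨ G.dist x y = 3 then (1 : ℝ) else 0 with hB
  set J : Matrix V V ℝ := Matrix.of fun _ _ => (1 : ℝ) with hJ
  have hAt : Aᵀ = A := by
    ext x y; simp [hA, distM, dc x y, -SimpleGraph.dist_eq_one_iff_adj]
  have hBt : Bᵀ = B := by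
    ext x y; simp [hB, dc x y, eq_comm]
  have hJt : Jᵀ = J := by
    ext x y; simp [hJ]
  have hdeg : ∀ y, ∑ z, A y z = b 0 := by
    intro y
    have := (hreg 0 (by norm_num) y y (by simp)).2
    rw [← this, ← aux_cnt]
    apply Finset.sum_congr rfl
    intro z _
    simp [hA, distM]
  have hcl : ∀ x, ∑ z, B x z = r := by
    intro x
    rw [← hcls x, ← aux_cnt]
    apply Finset.sum_congr rfl
    intro z _
    simp only [hB, Matrix.of_apply, eq_comm]
  have hAJ : A * J = (b 0 : ℝ) • J := by
    ext x y; simp [Matrix.mul_apply, hJ, hdeg]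
  have hBJ : B * J = (r : ℝ) • J := by
    ext x y; simp [Matrix.mul_apply, hJ, hcl]
  have hJA : J * A = (b 0 : ℝ) • J := by
    have := congrArg Matrix.transpose hAJ
    rwa [Matrix.transpose_mul, Matrix.transpose_smul, hJt, hAt] at this
  have hJB : J * B = (r : ℝ) • J := by
    have := congrArg Matrix.transpose hBJ
    rwa [Matrix.transpose_mul, Matrix.transpose_smul, hJt, hBt] at this
  have hJJ : J * J = (Fintype.card V : ℝ) • J := by
    ext x y; simp [Matrix.mul_apply, hJ]
  have eqv : ∀ x z y, (x = z ∨ G.dist x z = 3) → (z = y ∨ G.dist z y = 3) →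
      (x = y ∨ G.dist x y = 3) := by
    rintro x z y (rfl | h) (rfl | h')
    · simp
    · exact Or.inr h'
    · exact Or.inr h
    · rw [dc] at h
      exact hanti z x y h h'
  have esym : ∀ x z, (x = z ∨ G.dist x z = 3) → (z = x ∨ G.dist z x = 3) := by
    rintro x z (h | h)
    · exact Or.inl h.symm
    · right; rw [dc]; exact h
  have hAB : A * B + B = J := by
    have hmul : (A + 1) * B = J := by
      ext x y
      have hex : ∃ z, (z = x ∨ G.Adj x z) ∧ (z = y ∨ G.dist z y = 3) := by
        have h3 := hdiam x y
        have : G.dist x y = 0 ∨ G.dist x y = 1 ∨ G.dist x y = 2 ∨ G.dist x y = 3 := by omega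
        rcases this with h | h | h | h
        · exact ⟨x, Or.inl rfl, Or.inl ((dz _ _).1 h)⟩
        · exact ⟨y, Or.inr ((d1 _ _).1 h), Or.inl rfl⟩
        · have := (hreg 2 (by norm_num) y x (by rw [dc]; exact h)).2
          rw [← this, Set.ncard_pos] at hb2
          obtain ⟨z, hz1, hz2⟩ := hb2
          exact ⟨z, Or.inr hz1, Or.inr (by rw [dc]; exact hz2)⟩
        · exact ⟨x, Or.inl rfl, Or.inr h⟩
      obtain ⟨z, hz1, hz2⟩ := hex
      have near : ∀ w, (w = x ∨ G.Adj x w) → G.dist x w ≤ 1 := by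
        rintro w (rfl | h)
        · simp
        · exact ((d1 _ _).2 h).le
      have val : ∀ w, (A + 1) x w = if (w = x ∨ G.Adj x w) then (1 : ℝ) else 0 := by
        intro w
        by_cases hw : w = x
        · subst hw; simp [hA, distM]
        · simp [hA, distM, hw, Matrix.one_apply, Ne.symm hw]
      rw [Matrix.mul_apply, Finset.sum_eq_single z]
      · rw [val, if_pos hz1]; simp [hB, hJ, hz2]
      · intro w _ hwz
        rw [val]
        by_cases hw1 : (w = x ∨ G.Adj x w)
        · have : ¬ (w = y ∨ G.dist w y = 3) := by
            intro hw2
            rcases eqv w y z hw2 (esym _ _ hz2) with h | h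
            · exact hwz h
            · have e1 := near w hw1
              have e2 := near z hz1
              have e3 := tri w x z
              rw [dc w x] at e3
              omega
          simp [hB, this]
        · simp [hw1]
      · simp
    rw [← hmul, add_mul, one_mul]
  have hBA : B * A + B = J := by
    have := congrArg Matrix.transpose hAB
    rwa [Matrix.transpose_add, Matrix.transpose_mul, hJt, hBt, hAt] at this
  have hBB : B * B = (r : ℝ) • B := by
    ext x y
    rw [Matrix.mul_apply, Matrix.smul_apply]
    by_cases h : x = y ∨ G.dist x y = 3
    · have : ∀ z, B x z * B z y = B x z := by
        intro z
        by_cases hz : x = z ∨ G.dist x z = 3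
        · have := eqv z x y (esym _ _ hz) h
          simp [hB, this]
        · simp [hB, hz]
      simp only [this, hcl]
      simp [hB, h]
    · have : ∀ z, B x z * B z y = 0 := by
        intro z
        by_cases hz : x = z ∨ G.dist x z = 3
        · have : ¬ (z = y ∨ G.dist z y = 3) := fun h' => h (eqv x z y hz h')
          simp [hB, this]
        · simp [hB, hz]
      simp only [this]
      simp [hB, h]
  have hA2 : A * B - A = distM G 2 := by
    have : A * B = J - B := by rw [← hAB]; abel
    rw [this]
    ext x y
    have h3 := hdiam x y
    have : G.dist x y = 0 ∨ G.dist x y = 1 ∨ G.dist x y = 2 ∨ G.dist x y = 3 := by omega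
    rcases this with h | h | h | h <;>
    simp [hJ, hB, hA, distM, h, ← dz x y, -SimpleGraph.dist_eq_one_iff_adj]
  have hAA : A * A = (b 0 : ℝ) • 1 + ((b 0 : ℝ) - b 1 - 1) • A + (c 2 : ℝ) • (A * B - A) := by
    rw [hA2]
    ext x y
    have ent : (A * A) x y = (({z | G.Adj y z ∧ G.dist x z = 1} : Set V).ncard : ℝ) := by
      rw [Matrix.mul_apply, ← aux_cnt]
      apply Finset.sum_congr rfl
      intro z _
      simp only [hA, distM, Matrix.of_apply, ← d1 y z, dc z y]
      by_cases u : G.dist x z = 1 <;> by_cases w : G.dist y z = 1 <;> simp [u, w]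
    rw [ent]
    have h3 := hdiam x y
    have : G.dist x y = 0 ∨ G.dist x y = 1 ∨ G.dist x y = 2 ∨ G.dist x y = 3 := by omega
    rcases this with h | h | h | h
    · have e := (hreg 0 (by norm_num) x y h).2
      simp only [zero_add] at e
      rw [e]
      simp [hA, distM, h, (dz x y).1 h]
    · have e := hreg 1 (by norm_num) x y h
      have ne : x ≠ y := fun hh => by rw [(dz x y).2 hh] at h; omega
      have hsum : (b 0 : ℝ) = (c 1 : ℝ) + (({z | G.Adj y z ∧ G.dist x z = 1} : Set V).ncard : ℝ)
          + b 1 := by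
        rw [← hdeg y, ← e.1, ← e.2, ← aux_cnt, ← aux_cnt, ← aux_cnt, ← Finset.sum_add_distrib,
          ← Finset.sum_add_distrib]
        apply Finset.sum_congr rfl
        intro z _
        by_cases hz : G.Adj y z
        · have t1 := tri x y z
          have t2 := (d1 y z).2 hz
          have : G.dist x z = 0 ∨ G.dist x z = 1 ∨ G.dist x z = 2 := by omega
          rcases this with u | u | u <;> simp [hA, distM, hz, u]
        · simp [hA, distM, hz]
      rw [hc1] at hsum
      simp [hA, distM, h, Matrix.one_apply, ne, -SimpleGraph.dist_eq_one_iff_adj]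
      push_cast at hsum
      linarith
    · have e := (hreg 2 (by norm_num) x y h).1
      have ne : x ≠ y := fun hh => by rw [(dz x y).2 hh] at h; omega
      simp only [Nat.add_one_sub_one] at e
      norm_num at e
      simp [hA, distM, h, Matrix.one_apply, ne, -SimpleGraph.dist_eq_one_iff_adj]
      simpa using e
    · have ne : x ≠ y := fun hh => by rw [(dz x y).2 hh] at h; omega
      have : ({z | G.Adj y z ∧ G.dist x z = 1} : Set V) = ∅ := by
        ext z
        simp only [Set.mem_ofPred_eq, Set.mem_empty_iff_false, iff_false]
        rintro ⟨u, w⟩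
        have t1 := tri x z y
        have t2 := (d1 z y).2 u.symm
        omega
      rw [this]
      simp [hA, distM, h, Matrix.one_apply, ne, -SimpleGraph.dist_eq_one_iff_adj]
  have hq0 : q < 0 := by linarith
  have hD : qDist G 3 q = (-(1 / q)) • A + (1 + 1 / q) • (J - 1) + (1 / q) ^ 2 • (B - 1) := by
    ext x y
    have h3 := hdiam x y
    have hI : Finset.Icc 1 3 = ({1, 2, 3} : Finset ℕ) := by decide
    have : G.dist x y = 0 ∨ G.dist x y = 1 ∨ G.dist x y = 2 ∨ G.dist x y = 3 := by omega
    rcases this with h | h | h | h <;>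
    simp [qDist, hI, Finset.sum_range_succ, hJ, hB, hA, distM, h, ← dz x y, Matrix.one_apply,
      -SimpleGraph.dist_eq_one_iff_adj]
  have main := aux_alg A B J (qDist G 3 q) (b 0) ((b 0 : ℝ) - b 1 - 1) (b 1) (c 2)
    (Fintype.card V) r (1 / q) θ₁ θ₂ θ₃ (by positivity) (by positivity) (by positivity)
    (one_div_neg.2 hq0) (by rw [le_div_iff_of_neg hq0]; linarith) rfl (by positivity)
    hAB hBA hBB hAA hAJ hJA hJB hBJ hJJ
    ⟨fun _ => 1, fun h => by
      have := congrFun h x₀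
      have hcard : (Fintype.card V : ℝ) ≠ 0 := by
        have : Nonempty V := ⟨x₀⟩
        exact_mod_cast Fintype.card_ne_zero
      apply hcard
      simpa [hJ, Matrix.mulVec, dotProduct] using this⟩ hD h1 h2 h3 hspec
  rw [main]
  have : -(r : ℝ) * (1 / q) = -(r : ℝ) / q := by ring
  rw [this]

/-- Proposition 3.10(2): an antipodal distance-regular graph of diameter
3 which is an antipodal `r`-cover, with distinct adjacency eigenvalues `k > θ₁ > θ₂ > θ₃`,
has exactly three distinct `q`-distance eigenvalues for `q ≤ −1` if and only if
`θ₁ = −r/q − 1`. -/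
theorem stmt15 (G : SimpleGraph V) (b c : ℕ → ℕ) (r : ℕ) (hG : IsDRG G 3 b c)
    (hcov : IsAntipodalCover G 3 r)
    (θ₁ θ₂ θ₃ : ℝ) (h1 : (b 0 : ℝ) > θ₁) (h2 : θ₁ > θ₂) (h3 : θ₂ > θ₃)
    (hspec : spectrum ℝ (distM G 1) = ({(b 0 : ℝ), θ₁, θ₂, θ₃} : Set ℝ))
    (q : ℝ) (hq : q ≤ -1) :
    (spectrum ℝ (qDist G 3 q)).ncard = 3 ↔ θ₁ = -(r : ℝ) / q - 1 := by
  exact aux_final G b c r hG hcov θ₁ θ₂ θ₃ h1 h2 h3 hspec q hq
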